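/- For every braid x ∈ B_n, the set MPF(x) is nonempty and finite. -/

import Mathlib

/-!
Everything rests on three properties of the Garside element `Δ`: conjugation by `Δ` permutes the
Artin generators (`Δ σ_i = σ_{n-2-i} Δ` with generators indexed from `0`), every generator is a
positive left divisor of `Δ`, and hence every braid becomes positive after multiplication by a
large power of `Δ`. They are proved in `BraidSeq.gar_conj`, `BraidSeq.gar_div` and
`exists_mul_pow_mem`. The other ingredient is the exponent sum `B n → ℤ`, which on a positive braid is the length of any positive
word representing it (`expSum`, `exists_word`).

*Nonemptiness.* If `x Δ^k` is positive then so is `rev (Δ^k) x Δ^k`, so `x` has a positive twisted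
conjugate. Whenever a positive `y` is not palindromic-free, some `σ_i⁻¹ y σ_i⁻¹` is again a positive
twisted conjugate, with exponent sum smaller by `2`; exponent sums of positive braids are
nonnegative, so this descent reaches a palindromic-free one. Among the positive palindromic-free
twisted conjugates choose one of minimal canonical length.

*Finiteness.* A common `m` bounds the canonical length of all elements of `MPF`. Let `y` be one of
them and `p` such that `Δ^{-p} y` and `y⁻¹ Δ^{p+m}` are positive. If `p ≥ 2`, then
`y = Δ ⋯ Δ` with a positive middle part, and since every generator divides `Δ` on both sides,
`y` is not palindromic-free. So `p ≤ 1`, the exponent sum of `y` is at most that of `Δ^{m+1}`, and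
only finitely many positive words are that short.
-/

/-! ### Braids, positivity and canonical length -/

def braidRels (m : ℕ) : Set (FreeGroup (Fin m)) :=
  { r | (∃ i j : Fin m, (i : ℕ) + 1 < (j : ℕ) ∧
          r = FreeGroup.of i * FreeGroup.of j * (FreeGroup.of i)⁻¹ * (FreeGroup.of j)⁻¹) ∨
        (∃ i j : Fin m, (i : ℕ) + 1 = (j : ℕ) ∧
          r = FreeGroup.of i * FreeGroup.of j * FreeGroup.of i *
              (FreeGroup.of j)⁻¹ * (FreeGroup.of i)⁻¹ * (FreeGroup.of j)⁻¹) }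

/-- The braid group on `n` strands. -/
abbrev B (n : ℕ) := PresentedGroup (braidRels (n - 1))

/-- The Artin generators. -/
def σ {n : ℕ} (i : Fin (n - 1)) : B n := PresentedGroup.of i

/-- Evaluation of a signed word in the generators. -/
def π {n : ℕ} (w : List (Fin (n - 1) × Bool)) : B n :=
  (w.map (fun p => if p.2 then σ p.1 else (σ p.1)⁻¹)).prod

/-- The submonoid of positive braids. -/
def P (n : ℕ) : Submonoid (B n) := Submonoid.closure (Set.range (σ (n := n)))

def σ' {n : ℕ} (j : ℕ) : B n := if h : j < n - 1 then σ ⟨j, h⟩ else 1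

/-- The Garside half-twist element Δ. -/
def Δ (n : ℕ) : B n :=
  ((List.range (n - 1)).map
    (fun k => (((List.range (k + 1)).reverse).map (σ' (n := n))).prod)).prod

/-- Simple elements: positive prefixes of Δ. -/
def Simple {n : ℕ} (s : B n) : Prop := s ∈ P n ∧ s⁻¹ * Δ n ∈ P n

/-- Palindromic-free positive braids. -/
def PalFree {n : ℕ} (x : B n) : Prop :=
  ∀ i : Fin (n - 1), (σ i)⁻¹ * x * (σ i)⁻¹ ∉ P n

/-- Canonical length at most `m`. -/
def lenLE {n : ℕ} (x : B n) (m : ℕ) : Prop :=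
  ∃ p : ℤ, (Δ n) ^ (-p) * x ∈ P n ∧ x⁻¹ * (Δ n) ^ (p + (m : ℤ)) ∈ P n

/-- Canonical length exactly `m`. -/
def lenEQ {n : ℕ} (x : B n) (m : ℕ) : Prop :=
  lenLE x m ∧ (1 ≤ m → ¬ lenLE x (m - 1))

/-- Left normal form (as a list of simple factors). -/
def IsLeftNF {n : ℕ} (x : B n) (L : List (B n)) : Prop :=
  (∀ s ∈ L, Simple s ∧ s ≠ 1) ∧ L.prod = x ∧
  ∀ i : ℕ, i + 1 < L.length → ∀ u : B n, Simple u →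
    u⁻¹ * (L.getD i 1 * L.getD (i + 1) 1) ∈ P n → u⁻¹ * L.getD i 1 ∈ P n

/-- Right normal form (as a list of simple factors). -/
def IsRightNF {n : ℕ} (x : B n) (L : List (B n)) : Prop :=
  (∀ s ∈ L, Simple s ∧ s ≠ 1) ∧ L.prod = x ∧
  ∀ i : ℕ, i + 1 < L.length → ∀ u : B n, Simple u →
    (L.getD i 1 * L.getD (i + 1) 1) * u⁻¹ ∈ P n → L.getD (i + 1) 1 * u⁻¹ ∈ P n

/-- The set of positive, palindromic-free, ε-twisted conjugates of `x`
of minimal canonical length. -/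
def MPF {n : ℕ} (rev : B n → B n) (x : B n) : Set (B n) :=
  { y | y ∈ P n ∧ PalFree y ∧ (∃ c : B n, y = rev c * x * c) ∧
    ∀ m : ℕ, (∃ z : B n, z ∈ P n ∧ PalFree z ∧ (∃ c : B n, z = rev c * x * c) ∧
      lenLE z m) → lenLE y m }

/-! ### The half-twist in a group with braid relations -/

section Garside

variable {G : Type*} [Group G]

/-- The descending product `s_k s_{k-1} ⋯ s_0`. -/
def desc (s : ℕ → G) (k : ℕ) : G := ((List.range (k + 1)).reverse.map s).prod

/-- The descending product `s_k s_{k-1} ⋯ s_1`, equal to `1` for `k = 0`. -/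
def descOne (s : ℕ → G) : ℕ → G
  | 0 => 1
  | k + 1 => s (k + 1) * descOne s k

/-- The half-twist `s_0 (s_1 s_0) ⋯ (s_{k-1} ⋯ s_0)` on the first `k` generators. -/
def gar (s : ℕ → G) (k : ℕ) : G := ((List.range k).map (desc s)).prod

lemma desc_zero (s : ℕ → G) : desc s 0 = s 0 := by simp [desc]

lemma desc_succ (s : ℕ → G) (k : ℕ) : desc s (k + 1) = s (k + 1) * desc s k := by
  simp [desc, List.range_succ]

lemma gar_succ (s : ℕ → G) (k : ℕ) : gar s (k + 1) = gar s k * desc s k := by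
  simp [gar, List.range_succ]

lemma desc_eq (s : ℕ → G) (k : ℕ) : desc s k = descOne s k * s 0 := by
  induction k with
  | zero => simp [desc_zero, descOne]
  | succ k ih => rw [desc_succ, ih, descOne, mul_assoc]

/-- The first `m` terms of the sequence `s` satisfy the braid relations. -/
structure BraidSeq (s : ℕ → G) (m : ℕ) : Prop where
  comm : ∀ i j, i + 1 < j → j < m → s i * s j = s j * s i
  braid : ∀ i, i + 1 < m → s i * s (i + 1) * s i = s (i + 1) * s i * s (i + 1)

variable {s : ℕ → G} {m : ℕ}

lemma BraidSeq.desc_comm (h : BraidSeq s m) (k j : ℕ) (hk : k + 1 < j) (hj : j < m) :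
    desc s k * s j = s j * desc s k := by
  induction k with
  | zero => rw [desc_zero, h.comm 0 j hk hj]
  | succ k ih =>
    rw [desc_succ, mul_assoc, ih (by omega), ← mul_assoc, h.comm _ j hk hj, mul_assoc]

lemma BraidSeq.gar_comm (h : BraidSeq s m) (k j : ℕ) (hk : k < j) (hj : j < m) :
    gar s k * s j = s j * gar s k := by
  induction k with
  | zero => simp [gar]
  | succ k ih =>
    rw [gar_succ, mul_assoc, h.desc_comm k j hk hj, ← mul_assoc, ih (by omega), mul_assoc]

lemma BraidSeq.desc_shift (h : BraidSeq s m) (k i : ℕ) (hi : i + 1 ≤ k) (hk : k < m) :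
    desc s k * s (i + 1) = s i * desc s k := by
  induction k with
  | zero => omega
  | succ k ih =>
    rcases Nat.lt_or_ge i k with hik | hik
    · rw [desc_succ, mul_assoc, ih (by omega) (by omega), ← mul_assoc, ← mul_assoc,
        h.comm i (k + 1) (by omega) hk]
    · obtain rfl : i = k := by omega
      cases i with
      | zero =>
        rw [desc_succ, desc_zero, ← h.braid 0 hk, mul_assoc]
      | succ l =>
        rw [desc_succ, desc_succ, mul_assoc, mul_assoc, h.desc_comm l _ (by omega) hk]
        simp only [← mul_assoc]
        rw [h.braid _ hk]

lemma BraidSeq.desc_mul_descOne (h : BraidSeq s m) (k l : ℕ) (hl : l + 1 ≤ k) (hk : k < m) :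
    desc s k * descOne s (l + 1) = desc s l * desc s k := by
  induction l with
  | zero => simp [descOne, desc_zero, h.desc_shift k 0 hl hk]
  | succ l ih =>
    rw [descOne, ← mul_assoc, h.desc_shift k _ hl hk, mul_assoc, ih (by omega), desc_succ,
      mul_assoc]

/-- The boundary case of `gar_conj`, where the shift relation for `desc` does not apply. -/
lemma BraidSeq.gar_conj_zero (h : BraidSeq s m) (k : ℕ) (hk : k < m) :
    gar s (k + 1) * s 0 = s k * gar s (k + 1) := by
  cases k with
  | zero => simp [gar, desc_zero]
  | succ k =>
    have key : desc s k * desc s (k + 1) * s 0 = desc s (k + 1) * desc s (k + 1) := by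
      conv_rhs => rw [desc_eq s (k + 1)]
      rw [← h.desc_mul_descOne (k + 1) k le_rfl hk, ← desc_eq, mul_assoc, ← desc_eq]
    calc gar s (k + 2) * s 0 = gar s k * (desc s k * desc s (k + 1) * s 0) := by
          rw [gar_succ, gar_succ]; group
      _ = (gar s k * s (k + 1)) * desc s k * desc s (k + 1) := by
          rw [key]; nth_rewrite 1 [desc_succ]; group
      _ = s (k + 1) * gar s (k + 2) := by
          rw [h.gar_comm k _ (by omega) hk, gar_succ, gar_succ]; group

lemma BraidSeq.gar_conj (h : BraidSeq s m) (k i : ℕ) (hi : i < k) (hk : k ≤ m) :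
    gar s k * s i = s (k - 1 - i) * gar s k := by
  induction k generalizing i with
  | zero => omega
  | succ k ih =>
    cases i with
    | zero => exact h.gar_conj_zero k hk
    | succ i =>
      rw [gar_succ, mul_assoc, h.desc_shift k i (by omega) hk, ← mul_assoc,
        ih i (by omega) (by omega), mul_assoc]
      congr 2
      omega

variable {M : Submonoid G}

lemma desc_mem (hM : ∀ i, s i ∈ M) (k : ℕ) : desc s k ∈ M := by
  induction k with
  | zero => rw [desc_zero]; exact hM 0
  | succ k ih => rw [desc_succ]; exact M.mul_mem (hM _) ih

lemma descOne_mem (hM : ∀ i, s i ∈ M) (k : ℕ) : descOne s k ∈ M := by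
  induction k with
  | zero => exact M.one_mem
  | succ k ih => exact M.mul_mem (hM _) ih

lemma gar_mem (hM : ∀ i, s i ∈ M) (k : ℕ) : gar s k ∈ M := by
  induction k with
  | zero => simp [gar]
  | succ k ih => rw [gar_succ]; exact M.mul_mem ih (desc_mem hM k)

/-- Each generator is a left divisor of the half-twist, with quotient in `M`. -/
lemma BraidSeq.gar_div (h : BraidSeq s m) (hM : ∀ i, s i ∈ M) (k i : ℕ) (hi : i < k)
    (hk : k ≤ m) : (s i)⁻¹ * gar s k ∈ M := by
  induction k with
  | zero => omega
  | succ k ih =>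
    rcases Nat.lt_or_ge i k with hik | hik
    · rw [gar_succ, ← mul_assoc]
      exact M.mul_mem (ih hik (by omega)) (desc_mem hM k)
    · obtain rfl : i = k := by omega
      have h1 : (s i)⁻¹ * gar s (i + 1) = gar s (i + 1) * (s 0)⁻¹ := by
        rw [inv_mul_eq_iff_eq_mul, ← mul_assoc, eq_mul_inv_iff_mul_eq, h.gar_conj_zero i hk]
      rw [h1, gar_succ, desc_eq, mul_assoc, mul_inv_cancel_right]
      exact M.mul_mem (gar_mem hM i) (descOne_mem hM i)

end Garside

/-! ### The Garside element of the braid group -/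

section Braid

variable {n : ℕ}

lemma σ'_of_lt (j : ℕ) (hj : j < n - 1) : (σ' j : B n) = σ ⟨j, hj⟩ := by
  simp [σ', hj]

lemma σ_eq (i : Fin (n - 1)) : (σ i : B n) = σ' (i : ℕ) := by
  rw [σ'_of_lt _ i.2]

lemma braidSeq_σ' : BraidSeq (σ' : ℕ → B n) (n - 1) where
  comm i j hij hj := by
    have hi : i < n - 1 := by omega
    rw [σ'_of_lt i hi, σ'_of_lt j hj]
    have h := PresentedGroup.one_of_mem (rels := braidRels (n - 1))
      (x := FreeGroup.of ⟨i, hi⟩ * FreeGroup.of ⟨j, hj⟩ * (FreeGroup.of ⟨i, hi⟩)⁻¹ *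
        (FreeGroup.of ⟨j, hj⟩)⁻¹) (Or.inl ⟨⟨i, hi⟩, ⟨j, hj⟩, hij, rfl⟩)
    simp only [map_mul, map_inv] at h
    rwa [mul_inv_eq_one, mul_inv_eq_iff_eq_mul] at h
  braid i hi := by
    have hi' : i < n - 1 := by omega
    rw [σ'_of_lt i hi', σ'_of_lt (i + 1) hi]
    have h := PresentedGroup.one_of_mem (rels := braidRels (n - 1))
      (x := FreeGroup.of ⟨i, hi'⟩ * FreeGroup.of ⟨i + 1, hi⟩ * FreeGroup.of ⟨i, hi'⟩ *
        (FreeGroup.of ⟨i + 1, hi⟩)⁻¹ * (FreeGroup.of ⟨i, hi'⟩)⁻¹ * (FreeGroup.of ⟨i + 1, hi⟩)⁻¹)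
      (Or.inr ⟨⟨i, hi'⟩, ⟨i + 1, hi⟩, rfl, rfl⟩)
    simp only [map_mul, map_inv] at h
    rwa [mul_inv_eq_one, mul_inv_eq_iff_eq_mul, mul_inv_eq_iff_eq_mul] at h

lemma Δ_eq : Δ n = gar (σ' : ℕ → B n) (n - 1) := rfl

lemma σ_mem (i : Fin (n - 1)) : (σ i : B n) ∈ P n := Submonoid.subset_closure ⟨i, rfl⟩

lemma σ'_mem (j : ℕ) : (σ' j : B n) ∈ P n := by
  unfold σ'
  split
  · exact σ_mem _
  · exact (P n).one_mem

lemma Δ_mem : Δ n ∈ P n := gar_mem σ'_mem _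

lemma σ_inv_mul_Δ (i : Fin (n - 1)) : (σ i)⁻¹ * Δ n ∈ P n := by
  rw [σ_eq, Δ_eq]
  exact braidSeq_σ'.gar_div σ'_mem _ _ i.2 le_rfl

lemma Δ_mul_σ (i : Fin (n - 1)) : Δ n * σ i = σ i.rev * Δ n := by
  rw [σ_eq, σ_eq, Δ_eq, braidSeq_σ'.gar_conj _ _ i.2 le_rfl]
  congr 2
  simp only [Fin.val_rev]
  omega

lemma Δ_mul_σ_inv (i : Fin (n - 1)) : Δ n * (σ i)⁻¹ ∈ P n := by
  have h : Δ n * (σ i)⁻¹ = (σ i.rev)⁻¹ * Δ n := by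
    rw [mul_inv_eq_iff_eq_mul, mul_assoc, Δ_mul_σ, inv_mul_cancel_left]
  rw [h]
  exact σ_inv_mul_Δ _

lemma Δ_conj_mem {a : B n} (ha : a ∈ P n) : Δ n * a * (Δ n)⁻¹ ∈ P n := by
  have h : P n ≤ (P n).comap (MulAut.conj (Δ n)).toMonoidHom := by
    refine Submonoid.closure_le.2 ?_
    rintro _ ⟨i, rfl⟩
    change Δ n * σ i * (Δ n)⁻¹ ∈ P n
    rw [Δ_mul_σ, mul_inv_cancel_right]
    exact σ_mem _
  exact h ha

lemma Δ_inv_conj_mem {a : B n} (ha : a ∈ P n) : (Δ n)⁻¹ * a * Δ n ∈ P n := by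
  have h : P n ≤ (P n).comap (MulAut.conj (Δ n)⁻¹).toMonoidHom := by
    refine Submonoid.closure_le.2 ?_
    rintro _ ⟨i, rfl⟩
    change (Δ n)⁻¹ * σ i * ((Δ n)⁻¹)⁻¹ ∈ P n
    have h2 := Δ_mul_σ i.rev
    rw [Fin.rev_rev] at h2
    rw [inv_inv, mul_assoc, ← h2, inv_mul_cancel_left]
    exact σ_mem _
  simpa using h ha

lemma Δ_pow_inv_conj_mem {a : B n} (ha : a ∈ P n) (k : ℕ) :
    ((Δ n) ^ k)⁻¹ * a * (Δ n) ^ k ∈ P n := by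
  induction k with
  | zero => simpa using ha
  | succ k ih =>
    have := Δ_inv_conj_mem ih
    convert this using 1
    rw [pow_succ]
    group

lemma exists_mul_pow_mem (x : B n) : ∃ k : ℕ, x * (Δ n) ^ k ∈ P n := by
  have hx : x ∈ Subgroup.closure (Set.range (PresentedGroup.of (rels := braidRels (n - 1)))) := by
    rw [PresentedGroup.closure_range_of]
    trivial
  induction hx using Subgroup.closure_induction'' with
  | mem x hx =>
    obtain ⟨i, rfl⟩ := hx
    exact ⟨0, by rw [pow_zero, mul_one]; exact σ_mem i⟩
  | inv_mem x hx =>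
    obtain ⟨i, rfl⟩ := hx
    exact ⟨1, by rw [pow_one]; exact σ_inv_mul_Δ i⟩
  | one => exact ⟨0, by simp⟩
  | mul x y _ _ hx hy =>
    obtain ⟨k, hk⟩ := hx
    obtain ⟨l, hl⟩ := hy
    refine ⟨l + k, ?_⟩
    have := (P n).mul_mem hk (Δ_pow_inv_conj_mem hl k)
    convert this using 1
    rw [pow_add]
    group

/-! ### Exponent sum -/

/-- The exponent sum, written multiplicatively: the homomorphism sending each `σ_i` to `1 : ℤ`. -/
def expHom (n : ℕ) : B n →* Multiplicative ℤ :=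
  PresentedGroup.toGroup (f := fun _ => Multiplicative.ofAdd (1 : ℤ)) (by
    rintro r (⟨i, j, -, rfl⟩ | ⟨i, j, -, rfl⟩) <;> simp)

/-- The exponent sum of a braid. -/
def expSum (x : B n) : ℤ := (expHom n x).toAdd

lemma expSum_mul (x y : B n) : expSum (x * y) = expSum x + expSum y := by simp [expSum]

lemma expSum_inv (x : B n) : expSum x⁻¹ = -expSum x := by simp [expSum]

lemma expSum_zpow (x : B n) (k : ℤ) : expSum (x ^ k) = k * expSum x := by simp [expSum]

lemma expSum_σ (i : Fin (n - 1)) : expSum (σ i : B n) = 1 := by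
  simp [expSum, expHom, σ, PresentedGroup.toGroup.of]

lemma exists_word {y : B n} (hy : y ∈ P n) :
    ∃ w : List (Fin (n - 1)), (w.map σ).prod = y ∧ (w.length : ℤ) = expSum y := by
  induction hy using Submonoid.closure_induction with
  | mem y hy =>
    obtain ⟨i, rfl⟩ := hy
    exact ⟨[i], by simp, by simp [expSum_σ]⟩
  | one => exact ⟨[], by simp, by simp [expSum]⟩
  | mul y z _ _ hy hz =>
    obtain ⟨v, rfl, hv⟩ := hy
    obtain ⟨w, rfl, hw⟩ := hz
    exact ⟨v ++ w, by simp, by simp [expSum_mul, hv, hw]⟩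

lemma expSum_nonneg {y : B n} (hy : y ∈ P n) : 0 ≤ expSum y := by
  obtain ⟨w, -, hw⟩ := exists_word hy
  omega

lemma finite_expSum_le (N : ℕ) : {y : B n | y ∈ P n ∧ expSum y ≤ N}.Finite := by
  refine ((List.finite_length_le (Fin (n - 1)) N).image (fun w => (w.map σ).prod)).subset ?_
  rintro y ⟨hy, hN⟩
  obtain ⟨w, hw, hl⟩ := exists_word hy
  refine ⟨w, ?_, hw⟩
  change w.length ≤ N
  omega

/-! ### Canonical length and palindromic-free braids -/

lemma lenLE_mono {x : B n} {k l : ℕ} (hkl : k ≤ l) (h : lenLE x k) : lenLE x l := by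
  obtain ⟨p, h1, h2⟩ := h
  refine ⟨p, h1, ?_⟩
  have h3 : (Δ n) ^ (p + (l : ℤ)) = (Δ n) ^ (p + (k : ℤ)) * (Δ n) ^ (l - k) := by
    rw [← zpow_natCast, ← zpow_add, Nat.cast_sub hkl]
    congr 1
    ring
  rw [h3, ← mul_assoc]
  exact (P n).mul_mem h2 ((P n).pow_mem Δ_mem _)

lemma exists_lenLE {x : B n} (hx : x ∈ P n) : ∃ m, lenLE x m := by
  obtain ⟨k, hk⟩ := exists_mul_pow_mem x⁻¹
  exact ⟨k, 0, by simpa using hx, by simpa using hk⟩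

/-- A positive braid divisible by `Δ²` contains a palindromic factor for every generator `σ_i`. -/
lemma PalFree.le_one {y : B n} (hy : PalFree y) (i : Fin (n - 1)) {p : ℤ}
    (hp : (Δ n) ^ (-p) * y ∈ P n) : p ≤ 1 := by
  by_contra! h
  obtain ⟨q, hq⟩ : ∃ q : ℕ, p = 2 + q := ⟨(p - 2).toNat, by omega⟩
  refine hy i ?_
  have h1 := (P n).mul_mem ((P n).mul_mem (σ_inv_mul_Δ i) ((P n).pow_mem Δ_mem q))
    ((P n).mul_mem (Δ_conj_mem hp) (Δ_mul_σ_inv i))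
  convert h1 using 1
  subst hq
  rw [← zpow_natCast]
  group

lemma PalFree.expSum_le {y : B n} (hyP : y ∈ P n) (hy : PalFree y) {m : ℕ} (h : lenLE y m) :
    expSum y ≤ (1 + m) * expSum (Δ n) := by
  obtain ⟨p, h1, h2⟩ := h
  have h3 := expSum_nonneg h2
  rw [expSum_mul, expSum_inv, expSum_zpow] at h3
  have hΔ : 0 ≤ expSum (Δ n) := expSum_nonneg Δ_mem
  obtain ⟨w, hw, hl⟩ := exists_word hyP
  cases w with
  | nil =>
    simp only [List.length_nil, Nat.cast_zero] at hl
    rw [← hl]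
    positivity
  | cons i w =>
    have hp := hy.le_one i h1
    nlinarith

lemma exists_palFree (rev : B n → B n)
    (hrev_mul : ∀ x y : B n, rev (x * y) = rev y * rev x)
    (hrev_gen : ∀ i : Fin (n - 1), rev (σ i) = σ i) (x : B n) :
    ∃ z : B n, z ∈ P n ∧ PalFree z ∧ ∃ c : B n, z = rev c * x * c := by
  have hone : rev 1 = 1 := by
    have := hrev_mul 1 1
    rw [mul_one] at this
    exact (mul_eq_left.1 this.symm)
  have hinv : ∀ i : Fin (n - 1), rev (σ i)⁻¹ = (σ i)⁻¹ := by
    intro i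
    have := hrev_mul (σ i) (σ i)⁻¹
    rw [mul_inv_cancel, hone, hrev_gen] at this
    exact eq_inv_of_mul_eq_one_left this.symm
  have hpos : ∀ a ∈ P n, rev a ∈ P n := by
    intro a ha
    induction ha using Submonoid.closure_induction with
    | mem a ha =>
      obtain ⟨i, rfl⟩ := ha
      rw [hrev_gen]
      exact σ_mem i
    | one => rw [hone]; exact (P n).one_mem
    | mul a b _ _ ha hb => rw [hrev_mul]; exact (P n).mul_mem hb ha
  -- Removing palindromic pairs `σ_i ⋯ σ_i` terminates because the exponent sum drops by `2`.
  have descent : ∀ (N : ℕ) (y c : B n), y ∈ P n → y = rev c * x * c → expSum y ≤ N →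
      ∃ z : B n, z ∈ P n ∧ PalFree z ∧ ∃ c : B n, z = rev c * x * c := by
    intro N
    induction N with
    | zero =>
      intro y c hy hc hN
      refine ⟨y, hy, ?_, c, hc⟩
      intro i hi
      have := expSum_nonneg hi
      simp only [expSum_mul, expSum_inv, expSum_σ] at this
      push_cast at hN
      omega
    | succ N ih =>
      intro y c hy hc hN
      by_cases hpf : PalFree y
      · exact ⟨y, hy, hpf, c, hc⟩
      · simp only [PalFree, not_forall, not_not] at hpf
        obtain ⟨i, hi⟩ := hpf
        refine ih _ (c * (σ i)⁻¹) hi ?_ ?_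
        · rw [hrev_mul, hinv, hc]
          group
        · simp only [expSum_mul, expSum_inv, expSum_σ]
          push_cast at hN
          omega
  obtain ⟨k, hk⟩ := exists_mul_pow_mem x
  refine descent (expSum (rev (Δ n ^ k) * x * Δ n ^ k)).toNat _ (Δ n ^ k) ?_ rfl (by omega)
  rw [mul_assoc]
  exact (P n).mul_mem (hpos _ ((P n).pow_mem Δ_mem k)) hk

end Braid

/-- `MPF x` is nonempty and finite. -/
theorem MPF_nonempty_finite (n : ℕ)
    (rev : B n → B n)
    (hrev_mul : ∀ x y : B n, rev (x * y) = rev y * rev x)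
    (hrev_gen : ∀ i : Fin (n - 1), rev (σ i) = σ i)
    (x : B n) :
    (MPF rev x).Nonempty ∧ (MPF rev x).Finite := by
  classical
  have hex : ∃ m : ℕ, ∃ z : B n, z ∈ P n ∧ PalFree z ∧ (∃ c : B n, z = rev c * x * c) ∧
      lenLE z m := by
    obtain ⟨z, hz, hpf, hc⟩ := exists_palFree rev hrev_mul hrev_gen x
    obtain ⟨m, hm⟩ := exists_lenLE hz
    exact ⟨m, z, hz, hpf, hc, hm⟩
  constructor
  · obtain ⟨z, hz, hpf, hc, hm⟩ := Nat.find_spec hex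
    exact ⟨z, hz, hpf, hc, fun m hm' => lenLE_mono (Nat.find_min' hex hm') hm⟩
  · obtain ⟨m, hm⟩ := hex
    refine (finite_expSum_le ((1 + m) * expSum (Δ n)).toNat).subset ?_
    rintro y ⟨hy, hpf, -, hmin⟩
    refine ⟨hy, ?_⟩
    have := PalFree.expSum_le hy hpf (hmin m hm)
    omega
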